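/- Gain of polynomial decay for the rescaled Fokker–Planck resolvent equation. Let d ≥ 1, α ∈ [0,4], β = 2, σ ∈ S^{d−1}, η ∈ (0,1], and write |u|_η := (η^{2/3} + |u|²)^{1/2} and ⌊u⌉ := (1+|u|²)^{1/2}. There exists 𝔤 > 0 (depending only on d) such that for every q ≥ −2 and all C² functions H, G : ℝ^d → ℂ with ∫ |H(u)|² ⌊u⌉^{q−d−α} du < ∞ and ∫ |G(u)|² ⌊u⌉^{q−d−α} du < ∞, satisfying −|u|_η² Δ_u H + (d+α) u·∇_u H − i(u·σ)|u|_η² H = G on ℝ^d, one has ∫_{ℝ^d} |H(u)|² ⌊u⌉^{q+𝔤−d−α} du ≲_{q,d,α} ∫_{ℝ^d} |G(u)|² ⌊u⌉^{q−d−α} du + ∫_{ℝ^d} |H(u)|² ⌊u⌉^{q−d−α} du, with a constant independent of η ∈ (0,1]. -/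

import Mathlib

open MeasureTheory Real Filter Topology intervalIntegral
open scoped InnerProductSpace

noncomputable section

/-- The velocity space `ℝ^d`. -/
abbrev Vs (d : ℕ) := EuclideanSpace ℝ (Fin d)

/-- Japanese bracket `⌊v⌉ = √(1+|v|²)`. -/
def jb {d : ℕ} (v : Vs d) : ℝ := Real.sqrt (1 + ‖v‖ ^ 2)

/-- Normalisation constant `c_{α,β}`. -/
def cNorm (d : ℕ) (α β : ℝ) : ℝ := (∫ v : Vs d, jb v ^ (-(d : ℝ) - α - β))⁻¹

/-- Power-law equilibrium `M(v) = c_{α,β} ⌊v⌉^{-(d+α)}`. -/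
def Meq (d : ℕ) (α β : ℝ) (v : Vs d) : ℝ := cNorm d α β * jb v ^ (-(d : ℝ) - α)

/-- `M_β = ⌊·⌉^{-β} M`. -/
def Mbeta (d : ℕ) (α β : ℝ) (v : Vs d) : ℝ := jb v ^ (-β) * Meq d α β v

/-- Squared weighted norm `‖h‖_k² = ∫ (1+|v|²)^k |h|² M dv`. -/
def wnSq (d : ℕ) (α β k : ℝ) (h : Vs d → ℂ) : ℝ :=
  ∫ v : Vs d, (1 + ‖v‖ ^ 2) ^ k * ‖h v‖ ^ 2 * Meq d α β v

/-- Weighted norm `‖h‖_k = ‖(1+|·|²)^{k/2} h‖_{L²(M)}`. -/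
def wn (d : ℕ) (α β k : ℝ) (h : Vs d → ℂ) : ℝ := Real.sqrt (wnSq d α β k h)

/-- Projection `P h = ∫ h M_β dv`. -/
def Pavg (d : ℕ) (α β : ℝ) (h : Vs d → ℂ) : ℂ := ∫ v : Vs d, h v * (Mbeta d α β v : ℂ)

/-- Real part of the `L²(M)` scalar product `⟨f,g⟩`. -/
def reInnerM (d : ℕ) (α β : ℝ) (f g : Vs d → ℂ) : ℝ :=
  ∫ v : Vs d, (f v * (starRingEnd ℂ) (g v)).re * Meq d α β v

/-- The `L²(M)` scalar product `⟨f,g⟩`. -/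
def cInnerM (d : ℕ) (α β : ℝ) (f g : Vs d → ℂ) : ℂ :=
  ∫ v : Vs d, f v * (starRingEnd ℂ) (g v) * (Meq d α β v : ℂ)

/-- Membership in `L²(⌊·⌉^{-β} M dv)`. -/
def MemL2w (d : ℕ) (α β : ℝ) (h : Vs d → ℂ) : Prop :=
  AEStronglyMeasurable h (volume : Measure (Vs d)) ∧
    Integrable (fun v : Vs d => ‖h v‖ ^ 2 * jb v ^ (-β) * Meq d α β v)

/-- The scaling function `Θ(η)`. -/
def ThetaFn (α β η : ℝ) : ℝ :=
  if 2 + β < α then η ^ 2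
  else if α = 2 + β then η ^ 2 * |Real.log η|
  else η ^ ((α + β) / (1 + β))

/-- Weighted coercivity (spectral gap) hypothesis. -/
def Coercive (d : ℕ) (α β lam : ℝ) (L : (Vs d → ℂ) → Vs d → ℂ) : Prop :=
  ∀ h : Vs d → ℂ,
    lam * wnSq d α β (-β) (fun v => h v - Pavg d α β h) ≤ - reInnerM d α β (L h) h

/-- Amplitude of collisions at large velocities hypothesis. -/
def LargeV (d : ℕ) (α β : ℝ) (L : (Vs d → ℂ) → Vs d → ℂ) : Prop :=
  ∀ χ : Vs d → ℝ, ContDiff ℝ (⊤ : ℕ∞) χ → (∀ v, 0 ≤ χ v) → (∀ v, χ v ≤ 1) →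
    (∀ v, ‖v‖ ≤ 1 → χ v = 1) → (∀ v, 2 ≤ ‖v‖ → χ v = 0) →
    ∃ C > 0, ∀ R : ℝ, 1 ≤ R →
      wn d α β β (L (fun w => ((χ (R⁻¹ • w) : ℝ) : ℂ))) ≤ C * R ^ (-((α + β) / 2))

/-- `L` commutes with rotations in `v`. -/
def CommutesWithRotations (d : ℕ) (L : (Vs d → ℂ) → Vs d → ℂ) : Prop :=
  ∀ (O : Vs d ≃ₗᵢ[ℝ] Vs d) (f : Vs d → ℂ), L (fun v => f (O v)) = fun v => L f (O v)

/-- The fluid-mode eigenequation `-L*φ - iη(v·σ)φ = μ ⌊v⌉^{-β} φ`. -/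
def FluidEq (d : ℕ) (β : ℝ) (Lstar : (Vs d → ℂ) → Vs d → ℂ) (η : ℝ) (σ : Vs d)
    (φ : Vs d → ℂ) (μ : ℂ) : Prop :=
  ∀ v : Vs d, -(Lstar φ v) - Complex.I * (η : ℂ) * ((⟪v, σ⟫_ℝ : ℝ) : ℂ) * φ v
      = μ * ((jb v ^ (-β) : ℝ) : ℂ) * φ v

/-- `|u|_η = (η^{2/(1+β)} + |u|²)^{1/2}`. -/
def uabsEta (β η : ℝ) {d : ℕ} (u : Vs d) : ℝ := Real.sqrt (η ^ ((2 : ℝ) / (1 + β)) + ‖u‖ ^ 2)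

/-- Rescaled fluid mode `Φ_η(u) = φ_η(η^{-1/(1+β)} u)`. -/
def rescMode (β : ℝ) {d : ℕ} (φ : Vs d → ℂ) (η : ℝ) (u : Vs d) : ℂ :=
  φ ((η ^ (-(1 : ℝ) / (1 + β))) • u)

/-- Diffusion exponent `ζ`. -/
def zetaExp (α β : ℝ) : ℝ := if 2 + β ≤ α then 2 else (α + β) / (1 + β)

/-- Scaling function `θ(ε)`. -/
def thetaFn (α β ε : ℝ) : ℝ :=
  if α = 2 + β then ε ^ 2 * |Real.log ε|
  else if α = 0 then ε ^ (β / (1 + β)) / |Real.log ε|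
  else ε ^ zetaExp α β

/-- Laplacian of a real-valued function on `ℝ^d`. -/
def laplR {d : ℕ} (f : Vs d → ℝ) (v : Vs d) : ℝ :=
  ∑ i : Fin d,
    fderiv ℝ (fun w => fderiv ℝ f w (EuclideanSpace.single i 1)) v (EuclideanSpace.single i 1)

/-- Laplacian of a complex-valued function on `ℝ^d`. -/
def laplC {d : ℕ} (f : Vs d → ℂ) (v : Vs d) : ℂ :=
  ∑ i : Fin d,
    fderiv ℝ (fun w => fderiv ℝ f w (EuclideanSpace.single i 1)) v (EuclideanSpace.single i 1)

/-- Spatial Fourier transform. -/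
def FTr {d : ℕ} (g : Vs d → ℂ) (ξ : Vs d) : ℂ :=
  ∫ x : Vs d, Complex.exp (((-(2 * Real.pi * ⟪x, ξ⟫_ℝ)) : ℝ) * Complex.I) * g x

/-- Squared norm `‖m(∇_x) g‖²_{H^{-ζ}_x L²_v(M_β)}`. -/
def mixSq (d : ℕ) (α β ζ : ℝ) (m : Vs d → ℝ) (g : Vs d → Vs d → ℂ) : ℝ :=
  ∫ ξ : Vs d, ∫ v : Vs d,
    (1 + ‖ξ‖ ^ 2) ^ (-ζ) * (m ξ) ^ 2 * ‖FTr (fun x => g x v) ξ‖ ^ 2 * Mbeta d α β v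

/-- Squared weighted `L²_{x,v}(M)` norm. -/
def xvNormSq (d : ℕ) (α β k : ℝ) (g : Vs d → Vs d → ℂ) : ℝ :=
  ∫ x : Vs d, ∫ v : Vs d, (1 + ‖v‖ ^ 2) ^ k * ‖g x v‖ ^ 2 * Meq d α β v

/-- Surface measure on the unit sphere of `ℝ^d`. -/
def sphMeasure (d : ℕ) : Measure (Metric.sphere (0 : Vs d) 1) :=
  (volume : Measure (Vs d)).toSphere

/-- `|S^{d-1}|`. -/
def sphArea (d : ℕ) : ℝ := (sphMeasure d Set.univ).toReal

/-!
Write `τ = η^{2/3}`, `w = τ + |u|²`, `s = u·σ`, and let `ψ_p = χ² ⌊u⌉^p` for a cutoff `χ` at scale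
`R`. All constants below are independent of `R` and of `τ ∈ [0, 1]`.

* The real part of the equation tested against `ψ_p H̄` does not see the transport term and bounds
  `∫ w ψ_p |∇H|²` by the data `∫ (|H|² + |G|²) ⌊u⌉^p`.
* The imaginary part of the equation tested against `s ψ_{p-1} H̄` makes the transport term the
  nonnegative quantity `s² w ψ_{p-1} |H|²`, whose integral is therefore bounded by the data as well.
* This controls `H` with one extra power of `⌊u⌉` except where `s` is small. To recover that region,
  integrate `∂_σ (s ψ_{p+1} |H|²)`: the derivative of `s` is `1` and produces `∫ ψ_{p+1} |H|²`, and
  the remaining terms are absorbed by the two previous bounds.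

Letting `R → ∞` gives the gain `𝔤 = 1` in every dimension.
-/

open scoped Gradient ComplexConjugate

section LinearAlgebra

variable {ι E F : Type*} [Fintype ι] [NormedAddCommGroup E] [InnerProductSpace ℝ E]
  [NormedAddCommGroup F] [NormedSpace ℝ F]

lemma norm_sq_le_sum_norm_sq_orthonormalBasis (A : E →L[ℝ] F) (b : OrthonormalBasis ι ℝ E) :
    ‖A‖ ^ 2 ≤ ∑ i, ‖A (b i)‖ ^ 2 := by
  have hS : 0 ≤ ∑ i, ‖A (b i)‖ ^ 2 := by positivity
  suffices ‖A‖ ≤ √(∑ i, ‖A (b i)‖ ^ 2) from (Real.le_sqrt (norm_nonneg _) hS).1 this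
  refine A.opNorm_le_bound (Real.sqrt_nonneg _) fun x => ?_
  calc ‖A x‖ = ‖∑ i, ⟪b i, x⟫_ℝ • A (b i)‖ := by
        conv_lhs => rw [← b.sum_repr' x, map_sum]
        simp only [map_smul]
    _ ≤ ∑ i, ‖A (b i)‖ * ‖⟪b i, x⟫_ℝ‖ :=
        (norm_sum_le _ _).trans_eq (Finset.sum_congr rfl fun i _ => by rw [norm_smul, mul_comm])
    _ ≤ √(∑ i, ‖A (b i)‖ ^ 2) * √(∑ i, ‖⟪b i, x⟫_ℝ‖ ^ 2) := Real.sum_mul_le_sqrt_mul_sqrt _ _ _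
    _ = √(∑ i, ‖A (b i)‖ ^ 2) * ‖x‖ := by
        rw [b.sum_sq_norm_inner_right, Real.sqrt_sq (norm_nonneg _)]

lemma sum_fderiv_smul_apply_orthonormalBasis [CompleteSpace E] (A : E →L[ℝ] F)
    (b : OrthonormalBasis ι ℝ E) (φ : E → ℝ) (u : E) :
    ∑ i, fderiv ℝ φ u (b i) • A (b i) = A (∇ φ u) := by
  conv_rhs => rw [← b.sum_repr' (∇ φ u), map_sum]
  simp only [map_smul, real_inner_comm, inner_gradient_left]

lemma norm_gradient [CompleteSpace E] (φ : E → ℝ) (u : E) : ‖∇ φ u‖ = ‖fderiv ℝ φ u‖ :=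
  LinearIsometryEquiv.norm_map _ _

lemma abs_inner_le_norm {σ : E} (hσ : ‖σ‖ = 1) (u : E) : |⟪u, σ⟫_ℝ| ≤ ‖u‖ := by
  simpa only [hσ, mul_one] using abs_real_inner_le_norm u σ

lemma fderiv_inner_mul {ζ : E → ℝ} {u : E} (hζ : DifferentiableAt ℝ ζ u) (σ v : E) :
    fderiv ℝ (fun u => ⟪u, σ⟫_ℝ * ζ u) u v = ⟪u, σ⟫_ℝ * fderiv ℝ ζ u v + ζ u * ⟪v, σ⟫_ℝ := by
  have hs : HasFDerivAt (fun u => ⟪u, σ⟫_ℝ) (innerSL ℝ σ) u :=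
    (innerSL ℝ σ).hasFDerivAt.congr_of_eventuallyEq (.of_forall fun _ => real_inner_comm _ _)
  rw [fderiv_fun_mul hs.differentiableAt hζ, hs.fderiv]
  simp [real_inner_comm]

end LinearAlgebra

section Bracket

variable {d : ℕ} (u : Vs d) (p : ℝ)

lemma sq_jb : jb u ^ 2 = 1 + ‖u‖ ^ 2 := Real.sq_sqrt (by positivity)

lemma one_le_jb : 1 ≤ jb u := Real.one_le_sqrt.2 (by linarith [sq_nonneg ‖u‖])

lemma jb_pos : 0 < jb u := one_pos.trans_le (one_le_jb u)

lemma jb_rpow_pos : 0 < jb u ^ p := Real.rpow_pos_of_pos (jb_pos u) p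

lemma jb_rpow_add_one : jb u ^ (p + 1) = jb u ^ p * jb u := Real.rpow_add_one (jb_pos u).ne' p

lemma norm_le_jb : ‖u‖ ≤ jb u := Real.le_sqrt_of_sq_le (by linarith)

lemma abs_inner_le_jb {σ : Vs d} (hσ : ‖σ‖ = 1) (u : Vs d) : |⟪u, σ⟫_ℝ| ≤ jb u :=
  (abs_inner_le_norm hσ u).trans (norm_le_jb u)

lemma jb_le_one_add_norm : jb u ≤ 1 + ‖u‖ :=
  Real.sqrt_le_iff.2 ⟨by positivity, by linarith [add_sq 1 ‖u‖, norm_nonneg u]⟩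

lemma hasFDerivAt_jb : HasFDerivAt jb ((jb u)⁻¹ • innerSL ℝ u) u := by
  have h := ((hasStrictFDerivAt_norm_sq u).hasFDerivAt.const_add 1).sqrt
    (by positivity : (1 : ℝ) + ‖u‖ ^ 2 ≠ 0)
  refine h.congr_fderiv ?_
  ext v
  simp only [jb, smul_apply, smul_eq_mul, nsmul_eq_mul, Nat.cast_ofNat]
  ring

lemma contDiff_jb_rpow {n : WithTop ℕ∞} : ContDiff ℝ n fun u : Vs d => jb u ^ p :=
  ((contDiff_const.add (contDiff_norm_sq ℝ)).sqrt fun u => by positivity).rpow_const_of_ne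
    fun u => (jb_pos u).ne'

lemma continuous_jb_rpow : Continuous fun u : Vs d => jb u ^ p :=
  (contDiff_jb_rpow p (n := 0)).continuous

lemma jb_mul_norm_fderiv_jb_rpow_le :
    jb u * ‖fderiv ℝ (fun v : Vs d => jb v ^ p) u‖ ≤ |p| * jb u ^ p := by
  have hj := jb_pos u
  rw [((hasFDerivAt_jb u).rpow_const (Or.inl hj.ne')).fderiv, norm_smul, norm_smul,
    innerSL_apply_norm, Real.norm_eq_abs, Real.norm_eq_abs, abs_mul, abs_inv, abs_of_pos hj,
    abs_of_pos (jb_rpow_pos u _), Real.rpow_sub_one hj.ne']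
  calc jb u * (|p| * (jb u ^ p / jb u) * ((jb u)⁻¹ * ‖u‖))
      = |p| * jb u ^ p * (‖u‖ / jb u) := by field_simp
    _ ≤ |p| * jb u ^ p := mul_le_of_le_one_right
        (mul_nonneg (abs_nonneg p) (jb_rpow_pos u p).le) ((div_le_one hj).2 (norm_le_jb u))

end Bracket

section Cutoff

variable {d : ℕ}

/-- A `C¹` cutoff on `ℝ^d`, whose gradient decays like `M ⌊u⌉⁻¹`. The point of the definition is
that cutoffs at all scales `R ≥ 1` satisfy it with the same `M`. -/
structure IsCutoff (χ : Vs d → ℝ) (M : ℝ) : Prop where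
  contDiff : ContDiff ℝ 1 χ
  hasCompactSupport : HasCompactSupport χ
  nonneg : ∀ u, 0 ≤ χ u
  le_one : ∀ u, χ u ≤ 1
  jb_mul_norm_fderiv_le : ∀ u, jb u * ‖fderiv ℝ χ u‖ ≤ M

lemma exists_one_add_norm_mul_norm_fderiv_le {f : Vs d → ℝ} (hf : ContDiff ℝ 1 f)
    (hfc : HasCompactSupport f) : ∃ M : ℝ, ∀ x, (1 + ‖x‖) * ‖fderiv ℝ f x‖ ≤ M := by
  have := hf.continuous_fderiv one_ne_zero
  obtain ⟨M, hM⟩ := ((hfc.fderiv (𝕜 := ℝ)).smul_left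
    (f := fun x : Vs d => 1 + ‖x‖)).exists_bound_of_continuous (by fun_prop)
  refine ⟨M, fun x => (le_of_eq ?_).trans (hM x)⟩
  rw [Pi.smul_apply', norm_smul, Real.norm_of_nonneg (by positivity)]

lemma jb_mul_norm_fderiv_comp_smul_le {f : Vs d → ℝ} {M R : ℝ} (hR : 1 ≤ R)
    (hM : ∀ x, (1 + ‖x‖) * ‖fderiv ℝ f x‖ ≤ M) (u : Vs d) :
    jb u * ‖fderiv ℝ (fun v => f (R⁻¹ • v)) u‖ ≤ M := by
  have hR0 : 0 < R := one_pos.trans_le hR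
  have hj : jb u ≤ R * (1 + ‖R⁻¹ • u‖) := by
    rw [norm_smul, norm_inv, Real.norm_of_nonneg hR0.le, mul_add, mul_inv_cancel_left₀ hR0.ne']
    linarith [jb_le_one_add_norm u]
  calc jb u * ‖fderiv ℝ (fun v => f (R⁻¹ • v)) u‖
      = jb u * (R⁻¹ * ‖fderiv ℝ f (R⁻¹ • u)‖) := by
        rw [fderiv_comp_smul, norm_smul, norm_inv, Real.norm_of_nonneg hR0.le]
    _ ≤ R * (1 + ‖R⁻¹ • u‖) * (R⁻¹ * ‖fderiv ℝ f (R⁻¹ • u)‖) := by gcongr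
    _ = (1 + ‖R⁻¹ • u‖) * ‖fderiv ℝ f (R⁻¹ • u)‖ := by field_simp
    _ ≤ M := hM _

lemma exists_isCutoff_eq_one_on_ball (d : ℕ) :
    ∃ M ≥ (0 : ℝ), ∀ R : ℝ, 1 ≤ R →
      ∃ χ : Vs d → ℝ, IsCutoff χ M ∧ ∀ u ∈ Metric.ball (0 : Vs d) R, χ u = 1 := by
  obtain ⟨f, hf1⟩ : ∃ f : ContDiffBump (0 : Vs d), f.rIn = 1 := ⟨⟨1, 2, one_pos, one_lt_two⟩, rfl⟩
  obtain ⟨M, hM⟩ := exists_one_add_norm_mul_norm_fderiv_le f.contDiff f.hasCompactSupport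
  have hM0 : 0 ≤ M := le_trans (by positivity) (hM 0)
  refine ⟨M, hM0, fun R hR => ⟨fun u => f (R⁻¹ • u),
    ⟨f.contDiff.comp (contDiff_const_smul _), f.hasCompactSupport.comp_smul (by positivity),
      fun _ => f.nonneg, fun _ => f.le_one, jb_mul_norm_fderiv_comp_smul_le hR hM⟩,
    fun u hu => f.one_of_mem_closedBall ?_⟩⟩
  rw [mem_ball_zero_iff] at hu
  rw [hf1, mem_closedBall_zero_iff, norm_smul, norm_inv, Real.norm_of_nonneg (by linarith)]
  exact inv_mul_le_one_of_le₀ hu.le (by linarith)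

/-- `ζ` behaves like a symbol of order `p`, localized by the cutoff `χ`: it is `O(χ ⌊u⌉^p)` and a
derivative gains a factor `⌊u⌉⁻¹`. Only one power of `χ` is asked of `ζ` and `∇ζ`, since the other
one in the quadratic weight `χ² ⌊u⌉^p` is left to the unknown by Young's inequality. -/
structure IsLocalizedSymbol (χ : Vs d → ℝ) (p A : ℝ) (ζ : Vs d → ℝ) : Prop where
  contDiff : ContDiff ℝ 1 ζ
  hasCompactSupport : HasCompactSupport ζ
  abs_le : ∀ u, |ζ u| ≤ χ u * jb u ^ p
  jb_mul_norm_fderiv_le : ∀ u, jb u * ‖fderiv ℝ ζ u‖ ≤ A * (χ u * jb u ^ p)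

/-- The weight `χ² ⌊u⌉^p` of the truncated energy estimates. -/
def cutoffWeight (χ : Vs d → ℝ) (p : ℝ) (u : Vs d) : ℝ := χ u ^ 2 * jb u ^ p

variable {χ : Vs d → ℝ} {M p A : ℝ}

lemma IsCutoff.gradient_bound_nonneg (hχ : IsCutoff χ M) : 0 ≤ M :=
  (mul_nonneg (jb_pos 0).le (norm_nonneg _)).trans (hχ.jb_mul_norm_fderiv_le 0)

lemma cutoffWeight_nonneg (χ : Vs d → ℝ) (p : ℝ) (u : Vs d) : 0 ≤ cutoffWeight χ p u :=
  mul_nonneg (sq_nonneg _) (jb_rpow_pos u p).le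

lemma cutoffWeight_add_one (χ : Vs d → ℝ) (p : ℝ) (u : Vs d) :
    cutoffWeight χ (p + 1) u = cutoffWeight χ p u * jb u := by
  rw [cutoffWeight, cutoffWeight, jb_rpow_add_one, mul_assoc]

lemma IsCutoff.cutoffWeight_le (hχ : IsCutoff χ M) (p : ℝ) (u : Vs d) :
    cutoffWeight χ p u ≤ χ u * jb u ^ p := by
  have := hχ.nonneg u
  have := jb_rpow_pos u p
  rw [cutoffWeight]
  gcongr
  exact pow_le_of_le_one (hχ.nonneg u) (hχ.le_one u) two_ne_zero

lemma IsCutoff.cutoffWeight_le_jb_rpow (hχ : IsCutoff χ M) (p : ℝ) (u : Vs d) :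
    cutoffWeight χ p u ≤ jb u ^ p :=
  (hχ.cutoffWeight_le p u).trans (mul_le_of_le_one_left (jb_rpow_pos u p).le (hχ.le_one u))

lemma IsCutoff.isLocalizedSymbol_cutoffWeight (hχ : IsCutoff χ M) (p : ℝ) :
    IsLocalizedSymbol χ p (2 * M + |p|) (cutoffWeight χ p) where
  contDiff := (hχ.contDiff.pow 2).mul (contDiff_jb_rpow p)
  hasCompactSupport :=
    (hχ.hasCompactSupport.comp_left (g := (· ^ 2)) (zero_pow two_ne_zero)).mul_right
  abs_le u := (abs_of_nonneg (cutoffWeight_nonneg χ p u)).trans_le (hχ.cutoffWeight_le p u)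
  jb_mul_norm_fderiv_le u := by
    have hdχ := hχ.contDiff.differentiable one_ne_zero u
    have hdj := (contDiff_jb_rpow (d := d) p).differentiable one_ne_zero u
    have hχ0 := hχ.nonneg u
    have hj := jb_pos u
    have hjp := jb_rpow_pos u p
    have hD : fderiv ℝ (cutoffWeight χ p) u = χ u ^ 2 • fderiv ℝ (fun v : Vs d => jb v ^ p) u
        + jb u ^ p • (2 * χ u) • fderiv ℝ χ u := by
      refine ((hdχ.hasFDerivAt.pow 2).mul hdj.hasFDerivAt).fderiv.trans ?_
      simp
    calc jb u * ‖fderiv ℝ (cutoffWeight χ p) u‖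
        ≤ jb u * (χ u ^ 2 * ‖fderiv ℝ (fun v : Vs d => jb v ^ p) u‖
          + jb u ^ p * (2 * χ u * ‖fderiv ℝ χ u‖)) := by
          rw [hD]
          gcongr
          refine (norm_add_le _ _).trans_eq ?_
          simp only [norm_smul, norm_pow, norm_mul, Real.norm_two, Real.norm_of_nonneg hχ0,
            Real.norm_of_nonneg hjp.le]
      _ = χ u ^ 2 * (jb u * ‖fderiv ℝ (fun v : Vs d => jb v ^ p) u‖)
          + 2 * (jb u * ‖fderiv ℝ χ u‖) * (χ u * jb u ^ p) := by ring
      _ ≤ χ u ^ 2 * (|p| * jb u ^ p) + 2 * M * (χ u * jb u ^ p) := by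
          refine add_le_add (mul_le_mul_of_nonneg_left (jb_mul_norm_fderiv_jb_rpow_le u p)
            (sq_nonneg _)) (mul_le_mul_of_nonneg_right ?_ (by positivity))
          exact mul_le_mul_of_nonneg_left (hχ.jb_mul_norm_fderiv_le u) two_pos.le
      _ = |p| * cutoffWeight χ p u + 2 * M * (χ u * jb u ^ p) := by rw [cutoffWeight]; ring
      _ ≤ |p| * (χ u * jb u ^ p) + 2 * M * (χ u * jb u ^ p) := by
          gcongr
          exact hχ.cutoffWeight_le p u
      _ = (2 * M + |p|) * (χ u * jb u ^ p) := by ring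

lemma IsLocalizedSymbol.inner_mul {ζ : Vs d → ℝ} (hζ : IsLocalizedSymbol χ p A ζ) {σ : Vs d}
    (hσ : ‖σ‖ = 1) : IsLocalizedSymbol χ (p + 1) (A + 1) fun u => ⟪u, σ⟫_ℝ * ζ u where
  contDiff := (contDiff_id.inner ℝ contDiff_const).mul hζ.contDiff
  hasCompactSupport := hζ.hasCompactSupport.mul_left
  abs_le u := by
    rw [abs_mul, jb_rpow_add_one, ← mul_assoc, mul_comm _ (jb u)]
    exact mul_le_mul (abs_inner_le_jb hσ u) (hζ.abs_le u) (abs_nonneg _) (jb_pos u).le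
  jb_mul_norm_fderiv_le u := by
    have hj := jb_pos u
    have hop : ‖fderiv ℝ (fun u => ⟪u, σ⟫_ℝ * ζ u) u‖ ≤ jb u * ‖fderiv ℝ ζ u‖ + |ζ u| := by
      refine ContinuousLinearMap.opNorm_le_bound _ (by positivity) fun v => ?_
      rw [fderiv_inner_mul (hζ.contDiff.differentiable one_ne_zero u)]
      refine (norm_add_le _ _).trans ?_
      rw [norm_mul, norm_mul, add_mul, mul_assoc]
      refine add_le_add ?_ (mul_le_mul_of_nonneg_left (abs_inner_le_norm hσ v) (abs_nonneg _))
      exact mul_le_mul (abs_inner_le_jb hσ u) (ContinuousLinearMap.le_opNorm _ _)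
        (norm_nonneg _) hj.le
    calc jb u * ‖fderiv ℝ (fun u => ⟪u, σ⟫_ℝ * ζ u) u‖
        ≤ jb u * (jb u * ‖fderiv ℝ ζ u‖ + |ζ u|) := by gcongr
      _ ≤ jb u * (A * (χ u * jb u ^ p) + χ u * jb u ^ p) := by
          exact mul_le_mul_of_nonneg_left
            (add_le_add (hζ.jb_mul_norm_fderiv_le u) (hζ.abs_le u)) hj.le
      _ = (A + 1) * (χ u * jb u ^ (p + 1)) := by rw [jb_rpow_add_one]; ring

end Cutoff

section Divergence

variable {E F : Type*} [NormedAddCommGroup E] [NormedSpace ℝ E] [MeasurableSpace E]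
  [BorelSpace E] (μ : Measure E) [NormedAddCommGroup F] [NormedSpace ℝ F] {f : E → F}

lemma integrable_fderiv_apply_of_hasCompactSupport [IsFiniteMeasureOnCompacts μ]
    (hf : ContDiff ℝ 1 f) (hfc : HasCompactSupport f) (v : E) :
    Integrable (fun u => fderiv ℝ f u v) μ :=
  ((hf.continuous_fderiv one_ne_zero).clm_apply continuous_const).integrable_of_hasCompactSupport
    (hfc.fderiv_apply (𝕜 := ℝ) v)

lemma integral_fderiv_apply_eq_zero [FiniteDimensional ℝ E] [μ.IsAddHaarMeasure]
    (hf : ContDiff ℝ 1 f) (hfc : HasCompactSupport f) (v : E) : ∫ u, fderiv ℝ f u v ∂μ = 0 := by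
  have h := integral_smul_fderiv_eq_neg_fderiv_smul_of_integrable (μ := μ) (f := fun _ => (1 : ℝ))
    (g := f) (v := v) (by simp)
    (by simpa using integrable_fderiv_apply_of_hasCompactSupport μ hf hfc v)
    (by simpa using hf.continuous.integrable_of_hasCompactSupport hfc)
    (fun x _ => differentiableAt_const 1) (fun x _ => hf.differentiable one_ne_zero x)
  simpa using h

end Divergence

lemma integral_le_integral_of_le_add {X : Type*} [MeasurableSpace X] {μ : Measure X}
    {f g b : X → ℝ} (hf : Integrable f μ) (hg : Integrable g μ) (hb : Integrable b μ)
    (hb0 : ∫ x, b x ∂μ = 0) (h : ∀ x, f x ≤ g x + b x) : ∫ x, f x ∂μ ≤ ∫ x, g x ∂μ :=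
  calc ∫ x, f x ∂μ ≤ ∫ x, g x + b x ∂μ := integral_mono hf (hg.add hb) h
    _ = ∫ x, g x ∂μ := by rw [integral_add hg hb, hb0, add_zero]

lemma lintegral_le_of_forall_lintegral_ball_le {X : Type*} [PseudoMetricSpace X]
    [MeasurableSpace X] [OpensMeasurableSpace X] {μ : Measure X} {f : X → ENNReal}
    (hf : AEMeasurable f μ) (x : X) {B : ENNReal}
    (h : ∀ n : ℕ, ∫⁻ u in Metric.ball x (n + 1), f u ∂μ ≤ B) : ∫⁻ u, f u ∂μ ≤ B :=
  le_of_tendsto' ((aecover_ball (tendsto_natCast_atTop_atTop.atTop_add tendsto_const_nhds)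
    ).lintegral_tendsto_of_countably_generated hf) h

section Green

variable {d : ℕ} {φ : Vs d → ℝ} {H : Vs d → ℂ}

/-- `|∇H|²`, the sum of the squared moduli of the partial derivatives of `H`. -/
def gradSq (H : Vs d → ℂ) (u : Vs d) : ℝ := ∑ i, ‖fderiv ℝ H u (EuclideanSpace.single i 1)‖ ^ 2

/-- The divergence of the vector field `φ H̄ ∇H`, expanded. -/
def greenDensity (φ : Vs d → ℝ) (H : Vs d → ℂ) (u : Vs d) : ℂ :=
  (φ u * gradSq H u : ℝ) + φ u * (conj (H u) * laplC H u) + conj (H u) * fderiv ℝ H u (∇ φ u)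

lemma norm_fderiv_sq_le_gradSq (H : Vs d → ℂ) (u : Vs d) : ‖fderiv ℝ H u‖ ^ 2 ≤ gradSq H u := by
  simpa only [gradSq, EuclideanSpace.basisFun_apply] using
    norm_sq_le_sum_norm_sq_orthonormalBasis (fderiv ℝ H u) (EuclideanSpace.basisFun (Fin d) ℝ)

lemma fderiv_smul_conj_mul_apply {D : Vs d → ℂ} {u : Vs d} (hφ : DifferentiableAt ℝ φ u)
    (hH : DifferentiableAt ℝ H u) (hD : DifferentiableAt ℝ D u) (v : Vs d) :
    fderiv ℝ (fun w => φ w • (conj (H w) * D w)) u v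
      = φ u * (conj (fderiv ℝ H u v) * D u) + φ u * (conj (H u) * fderiv ℝ D u v)
        + conj (H u) * fderiv ℝ φ u v • D u := by
  have hHc := Complex.conjCLE.toContinuousLinearMap.hasFDerivAt.comp u hH.hasFDerivAt
  have h := (hφ.hasFDerivAt.smul (hHc.mul hD.hasFDerivAt)).fderiv
  refine (congrArg (· v) h).trans ?_
  simp only [ContinuousLinearEquiv.coe_coe, ContinuousAlgEquiv.coe_coeCLE, Function.comp_apply,
    Complex.conjCAE_apply, smul_add, Pi.mul_apply, add_apply, smul_apply, smul_eq_mul,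
    Complex.real_smul, ContinuousLinearMap.comp_apply, ContinuousAlgEquiv.coeCLE_apply,
    ContinuousLinearMap.smulRight_apply]
  ring

lemma greenDensity_eq_sum_fderiv (hφ : ContDiff ℝ 1 φ) (hH : ContDiff ℝ 2 H) (u : Vs d) :
    greenDensity φ H u = ∑ i, fderiv ℝ (fun v => φ v • (conj (H v) *
      fderiv ℝ H v (EuclideanSpace.single i 1))) u (EuclideanSpace.single i 1) := by
  have hD (i : Fin d) : DifferentiableAt ℝ (fun v => fderiv ℝ H v (EuclideanSpace.single i 1)) u :=
    ((hH.fderiv_right (m := 1) le_rfl).clm_apply contDiff_const).differentiable one_ne_zero u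
  have hgrad := sum_fderiv_smul_apply_orthonormalBasis (fderiv ℝ H u)
    (EuclideanSpace.basisFun (Fin d) ℝ) φ u
  simp only [EuclideanSpace.basisFun_apply] at hgrad
  simp only [fderiv_smul_conj_mul_apply (hφ.differentiable one_ne_zero u)
    (hH.differentiable two_ne_zero u) (hD _), Finset.sum_add_distrib, ← Finset.mul_sum, hgrad]
  simp only [greenDensity, gradSq, laplC, Complex.conj_mul', Complex.ofReal_mul,
    Complex.ofReal_sum, Complex.ofReal_pow]

lemma contDiff_smul_conj_mul_fderiv_apply (hφ : ContDiff ℝ 1 φ) (hH : ContDiff ℝ 2 H) (v : Vs d) :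
    ContDiff ℝ 1 fun u => φ u • (conj (H u) * fderiv ℝ H u v) :=
  hφ.smul ((Complex.conjCLE.contDiff.comp (hH.of_le one_le_two)).mul
    ((hH.fderiv_right le_rfl).clm_apply contDiff_const))

lemma integrable_greenDensity (hφ : ContDiff ℝ 1 φ) (hφc : HasCompactSupport φ)
    (hH : ContDiff ℝ 2 H) : Integrable (greenDensity φ H) := by
  rw [funext (greenDensity_eq_sum_fderiv hφ hH)]
  exact integrable_finsetSum _ fun i _ => integrable_fderiv_apply_of_hasCompactSupport _
    (contDiff_smul_conj_mul_fderiv_apply hφ hH _) hφc.smul_right _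

lemma integral_greenDensity (hφ : ContDiff ℝ 1 φ) (hφc : HasCompactSupport φ)
    (hH : ContDiff ℝ 2 H) : ∫ u, greenDensity φ H u = 0 := by
  simp only [greenDensity_eq_sum_fderiv hφ hH]
  rw [MeasureTheory.integral_finsetSum _ fun i _ => integrable_fderiv_apply_of_hasCompactSupport _
    (contDiff_smul_conj_mul_fderiv_apply hφ hH _) hφc.smul_right _]
  exact Finset.sum_eq_zero fun i _ => integral_fderiv_apply_eq_zero _
    (contDiff_smul_conj_mul_fderiv_apply hφ hH _) hφc.smul_right _

lemma integrable_re_greenDensity (hφ : ContDiff ℝ 1 φ) (hφc : HasCompactSupport φ)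
    (hH : ContDiff ℝ 2 H) : Integrable fun u => (greenDensity φ H u).re :=
  (integrable_greenDensity hφ hφc hH).re

lemma integrable_im_greenDensity (hφ : ContDiff ℝ 1 φ) (hφc : HasCompactSupport φ)
    (hH : ContDiff ℝ 2 H) : Integrable fun u => (greenDensity φ H u).im :=
  (integrable_greenDensity hφ hφc hH).im

lemma integral_re_greenDensity (hφ : ContDiff ℝ 1 φ) (hφc : HasCompactSupport φ)
    (hH : ContDiff ℝ 2 H) : ∫ u, (greenDensity φ H u).re = 0 :=
  (integral_re (integrable_greenDensity hφ hφc hH)).trans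
    (by rw [integral_greenDensity hφ hφc hH, map_zero])

lemma integral_im_greenDensity (hφ : ContDiff ℝ 1 φ) (hφc : HasCompactSupport φ)
    (hH : ContDiff ℝ 2 H) : ∫ u, (greenDensity φ H u).im = 0 :=
  (integral_im (integrable_greenDensity hφ hφc hH)).trans
    (by rw [integral_greenDensity hφ hφc hH, map_zero])

end Green

section Resolvent

variable {d : ℕ} {N τ p M A : ℝ} {σ : Vs d} {χ ζ : Vs d → ℝ} {H G : Vs d → ℂ}

/-- The operator `-(τ + |u|²) Δ + N u·∇ - i (u·σ) (τ + |u|²)`, which is the rescaled Fokker–Planck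
resolvent for `τ = η^{2/3}` and `N = d + α`. -/
def fpResolvent (N τ : ℝ) (σ : Vs d) (H : Vs d → ℂ) (u : Vs d) : ℂ :=
  -((τ + ‖u‖ ^ 2 : ℝ) : ℂ) * laplC H u + (N : ℂ) * fderiv ℝ H u u
    - Complex.I * ((⟪u, σ⟫_ℝ : ℝ) : ℂ) * ((τ + ‖u‖ ^ 2 : ℝ) : ℂ) * H u

lemma continuous_fpResolvent (N τ : ℝ) (σ : Vs d) (hH : ContDiff ℝ 2 H) :
    Continuous (fpResolvent N τ σ H) := by
  have hdH : ContDiff ℝ 1 (fderiv ℝ H) := hH.fderiv_right le_rfl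
  have hlapl : Continuous (laplC H) := continuous_finsetSum _ fun i _ =>
    ((hdH.clm_apply contDiff_const).continuous_fderiv one_ne_zero).clm_apply continuous_const
  have := hH.continuous
  have := hdH.continuous
  unfold fpResolvent
  fun_prop

/-- The terms of lower order in the energy identity for `fpResolvent N τ σ H = G` tested against
`ζ H̄`, i.e. `H̄ ∇H·(∇((τ + |u|²) ζ) + N ζ u) - ζ H̄ G`. -/
def energyRemainder (N τ : ℝ) (ζ : Vs d → ℝ) (H G : Vs d → ℂ) (u : Vs d) : ℂ :=
  conj (H u) * fderiv ℝ H u ((τ + ‖u‖ ^ 2) • ∇ ζ u + ((2 + N) * ζ u) • u)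
    - ζ u * (conj (H u) * G u)

lemma gradient_add_norm_sq_mul (τ : ℝ) {u : Vs d} (hζ : DifferentiableAt ℝ ζ u) :
    ∇ (fun v => (τ + ‖v‖ ^ 2) * ζ v) u = (τ + ‖u‖ ^ 2) • ∇ ζ u + (2 * ζ u) • u := by
  have hw := (hasStrictFDerivAt_norm_sq u).hasFDerivAt.const_add τ
  refine ext_inner_right ℝ fun v => ?_
  rw [inner_gradient_left, fderiv_fun_mul hw.differentiableAt hζ, hw.fderiv]
  simp only [add_apply, smul_apply, smul_eq_mul, coe_innerSL_apply, nsmul_eq_mul, Nat.cast_ofNat,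
    inner_add_left, inner_smul_left, ringHom_apply, inner_gradient_left, add_right_inj]
  ring

lemma greenDensity_add_norm_sq_mul {u : Vs d} (hζ : DifferentiableAt ℝ ζ u)
    (hG : fpResolvent N τ σ H u = G u) :
    greenDensity (fun v => (τ + ‖v‖ ^ 2) * ζ v) H u
      = ((τ + ‖u‖ ^ 2) * ζ u * gradSq H u : ℝ) + energyRemainder N τ ζ H G u
        - Complex.I * (⟪u, σ⟫_ℝ * ζ u * (τ + ‖u‖ ^ 2) * ‖H u‖ ^ 2 : ℝ) := by
  have hconj : (‖H u‖ ^ 2 : ℂ) = conj (H u) * H u := (Complex.conj_mul' _).symm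
  rw [greenDensity, energyRemainder, gradient_add_norm_sq_mul τ hζ, ← hG, fpResolvent]
  simp only [map_add, map_smul, Complex.real_smul]
  push_cast
  rw [hconj]
  ring

/-- The density `(‖H‖² + ‖G‖²) ⌊u⌉^p` of the right-hand side of the decay estimate. -/
def dataDensity (p : ℝ) (H G : Vs d → ℂ) (u : Vs d) : ℝ := (‖H u‖ ^ 2 + ‖G u‖ ^ 2) * jb u ^ p

/-- The density `(τ + |u|²) χ² ⌊u⌉^p ‖∇H‖²` of the truncated energy. -/
def energyDensity (τ : ℝ) (χ : Vs d → ℝ) (p : ℝ) (H : Vs d → ℂ) (u : Vs d) : ℝ :=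
  (τ + ‖u‖ ^ 2) * cutoffWeight χ p u * ‖fderiv ℝ H u‖ ^ 2

/-- The density `(u·σ)² (τ + |u|²) χ² ⌊u⌉^{p-1} ‖H‖²` controlled by the transport term. -/
def transportDensity (τ : ℝ) (σ : Vs d) (χ : Vs d → ℝ) (p : ℝ) (H : Vs d → ℂ) (u : Vs d) : ℝ :=
  ⟪u, σ⟫_ℝ ^ 2 * (τ + ‖u‖ ^ 2) * cutoffWeight χ (p - 1) u * ‖H u‖ ^ 2

lemma norm_smul_gradient_add_smul_le (hτ0 : 0 ≤ τ) (hτ1 : τ ≤ 1)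
    (hζ : IsLocalizedSymbol χ p A ζ) (c : ℝ) (u : Vs d) :
    ‖(τ + ‖u‖ ^ 2) • ∇ ζ u + (c * ζ u) • u‖
      ≤ (A + |c|) * (χ u * jb u ^ p) * √(τ + ‖u‖ ^ 2) := by
  have hw : 0 ≤ τ + ‖u‖ ^ 2 := by positivity
  have hwj : √(τ + ‖u‖ ^ 2) ≤ jb u := Real.sqrt_le_sqrt (by linarith)
  have huw : ‖u‖ ≤ √(τ + ‖u‖ ^ 2) := Real.le_sqrt_of_sq_le (by linarith)
  calc ‖(τ + ‖u‖ ^ 2) • ∇ ζ u + (c * ζ u) • u‖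
      ≤ (τ + ‖u‖ ^ 2) * ‖fderiv ℝ ζ u‖ + |c| * |ζ u| * ‖u‖ := by
        refine (norm_add_le _ _).trans_eq ?_
        rw [norm_smul, norm_smul, norm_gradient, norm_mul, Real.norm_of_nonneg hw,
          Real.norm_eq_abs, Real.norm_eq_abs]
    _ = √(τ + ‖u‖ ^ 2) * ‖fderiv ℝ ζ u‖ * √(τ + ‖u‖ ^ 2) + |c| * |ζ u| * ‖u‖ := by
        rw [mul_right_comm √_, Real.mul_self_sqrt hw]
    _ ≤ jb u * ‖fderiv ℝ ζ u‖ * √(τ + ‖u‖ ^ 2) + |c| * |ζ u| * √(τ + ‖u‖ ^ 2) := by gcongr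
    _ ≤ A * (χ u * jb u ^ p) * √(τ + ‖u‖ ^ 2)
        + |c| * (χ u * jb u ^ p) * √(τ + ‖u‖ ^ 2) := by
        refine add_le_add ?_ ?_ <;> refine mul_le_mul_of_nonneg_right ?_ (Real.sqrt_nonneg _)
        · exact hζ.jb_mul_norm_fderiv_le u
        · exact mul_le_mul_of_nonneg_left (hζ.abs_le u) (abs_nonneg c)
    _ = (A + |c|) * (χ u * jb u ^ p) * √(τ + ‖u‖ ^ 2) := by ring

lemma norm_mul_norm_fderiv_mul_le (hτ0 : 0 ≤ τ) (K : ℝ) (u : Vs d) :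
    ‖H u‖ * (‖fderiv ℝ H u‖ * (K * (χ u * jb u ^ p) * √(τ + ‖u‖ ^ 2)))
      ≤ energyDensity τ χ p H u / 2 + K ^ 2 / 2 * (‖H u‖ ^ 2 * jb u ^ p) := by
  have hjp := jb_rpow_pos u p
  set w := τ + ‖u‖ ^ 2
  have hw : 0 ≤ w := by positivity
  calc ‖H u‖ * (‖fderiv ℝ H u‖ * (K * (χ u * jb u ^ p) * √w))
      = jb u ^ p * ((χ u * √w * ‖fderiv ℝ H u‖) * (K * ‖H u‖)) := by ring
    _ ≤ jb u ^ p * (((χ u * √w * ‖fderiv ℝ H u‖) ^ 2 + (K * ‖H u‖) ^ 2) / 2) := by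
        gcongr
        linarith [two_mul_le_add_sq (χ u * √w * ‖fderiv ℝ H u‖) (K * ‖H u‖)]
    _ = energyDensity τ χ p H u / 2 + K ^ 2 / 2 * (‖H u‖ ^ 2 * jb u ^ p) := by
        rw [mul_pow, mul_pow, Real.sq_sqrt hw, energyDensity, cutoffWeight]
        ring

lemma norm_sq_mul_jb_rpow_le_dataDensity (p : ℝ) (H G : Vs d → ℂ) (u : Vs d) :
    ‖H u‖ ^ 2 * jb u ^ p ≤ dataDensity p H G u :=
  mul_le_mul_of_nonneg_right (le_add_of_nonneg_right (sq_nonneg _)) (jb_rpow_pos u p).le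

lemma norm_energyRemainder_le (hτ0 : 0 ≤ τ) (hτ1 : τ ≤ 1) (hχ : IsCutoff χ M)
    (hζ : IsLocalizedSymbol χ p A ζ) (u : Vs d) :
    ‖energyRemainder N τ ζ H G u‖
      ≤ energyDensity τ χ p H u / 2 + ((A + |2 + N|) ^ 2 + 1) / 2 * dataDensity p H G u := by
  set K := A + |2 + N|
  have hgrad : ‖H u‖ * (‖fderiv ℝ H u‖ * ‖(τ + ‖u‖ ^ 2) • ∇ ζ u + ((2 + N) * ζ u) • u‖)
      ≤ energyDensity τ χ p H u / 2 + K ^ 2 / 2 * (‖H u‖ ^ 2 * jb u ^ p) := by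
    refine le_trans ?_ (norm_mul_norm_fderiv_mul_le hτ0 K u)
    gcongr
    exact norm_smul_gradient_add_smul_le hτ0 hτ1 hζ (2 + N) u
  have hsource : |ζ u| * (‖H u‖ * ‖G u‖) ≤ dataDensity p H G u / 2 := by
    have hζ1 : |ζ u| ≤ jb u ^ p :=
      (hζ.abs_le u).trans (mul_le_of_le_one_left (jb_rpow_pos u p).le (hχ.le_one u))
    calc |ζ u| * (‖H u‖ * ‖G u‖) ≤ jb u ^ p * ((‖H u‖ ^ 2 + ‖G u‖ ^ 2) / 2) := by
          refine mul_le_mul hζ1 ?_ (by positivity) (jb_rpow_pos u p).le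
          linarith [two_mul_le_add_sq ‖H u‖ ‖G u‖]
      _ = dataDensity p H G u / 2 := by rw [dataDensity]; ring
  calc ‖energyRemainder N τ ζ H G u‖
      ≤ ‖H u‖ * (‖fderiv ℝ H u‖ * ‖(τ + ‖u‖ ^ 2) • ∇ ζ u + ((2 + N) * ζ u) • u‖)
        + |ζ u| * (‖H u‖ * ‖G u‖) := by
        refine (norm_sub_le _ _).trans ?_
        simp only [norm_mul, RCLike.norm_conj, Complex.norm_real, Real.norm_eq_abs]
        gcongr
        exact ContinuousLinearMap.le_opNorm _ _
    _ ≤ energyDensity τ χ p H u / 2 + (K ^ 2 + 1) / 2 * dataDensity p H G u := by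
        linarith [mul_le_mul_of_nonneg_left (norm_sq_mul_jb_rpow_le_dataDensity p H G u)
          (by positivity : 0 ≤ K ^ 2 / 2)]

lemma integrable_energyDensity (τ p : ℝ) (hχ : IsCutoff χ M) (hH : ContDiff ℝ 2 H) :
    Integrable (energyDensity τ χ p H) := by
  have hψ := hχ.isLocalizedSymbol_cutoffWeight p
  have := hψ.contDiff.continuous
  have := hH.continuous_fderiv two_ne_zero
  exact (by unfold energyDensity; fun_prop : Continuous _).integrable_of_hasCompactSupport
    (hψ.hasCompactSupport.mul_left.mul_right)

lemma integrable_transportDensity (τ p : ℝ) (σ : Vs d) (hχ : IsCutoff χ M)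
    (hH : ContDiff ℝ 2 H) : Integrable (transportDensity τ σ χ p H) := by
  have hψ := hχ.isLocalizedSymbol_cutoffWeight (p - 1)
  have := hψ.contDiff.continuous
  have := hH.continuous
  exact (by unfold transportDensity; fun_prop : Continuous _).integrable_of_hasCompactSupport
    (hψ.hasCompactSupport.mul_left.mul_right)

-- Real part of the Green identity: the transport term is purely imaginary and drops out.
lemma integral_energyDensity_le (hτ0 : 0 ≤ τ) (hτ1 : τ ≤ 1) (hχ : IsCutoff χ M)
    (hH : ContDiff ℝ 2 H) (hG : ∀ u, fpResolvent N τ σ H u = G u)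
    (hdata : Integrable (dataDensity p H G)) :
    ∫ u, energyDensity τ χ p H u
      ≤ ((2 * M + |p| + |2 + N|) ^ 2 + 1) * ∫ u, dataDensity p H G u := by
  have hψ := hχ.isLocalizedSymbol_cutoffWeight p
  have hφ : ContDiff ℝ 1 fun v => (τ + ‖v‖ ^ 2) * cutoffWeight χ p v :=
    (contDiff_const.add (contDiff_norm_sq ℝ)).mul hψ.contDiff
  have hφc : HasCompactSupport fun v => (τ + ‖v‖ ^ 2) * cutoffWeight χ p v :=
    hψ.hasCompactSupport.mul_left
  rw [← MeasureTheory.integral_const_mul]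
  refine integral_le_integral_of_le_add (integrable_energyDensity τ p hχ hH) (hdata.const_mul _)
    ((integrable_re_greenDensity hφ hφc hH).const_mul 2) ?_ fun u => ?_
  · rw [MeasureTheory.integral_const_mul]
    exact mul_eq_zero_of_right _ (integral_re_greenDensity hφ hφc hH)
  have hre := congrArg Complex.re
    (greenDensity_add_norm_sq_mul (hψ.contDiff.differentiable one_ne_zero u) (hG u))
  rw [Complex.sub_re, Complex.add_re, Complex.ofReal_re, Complex.I_mul_re, Complex.ofReal_im,
    neg_zero, sub_zero] at hre
  have hgrad : energyDensity τ χ p H u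
      ≤ (τ + ‖u‖ ^ 2) * cutoffWeight χ p u * gradSq H u :=
    mul_le_mul_of_nonneg_left (norm_fderiv_sq_le_gradSq H u)
      (mul_nonneg (by positivity) (cutoffWeight_nonneg χ p u))
  have hrem := (abs_le.1 ((Complex.abs_re_le_norm _).trans
    (norm_energyRemainder_le (N := N) (H := H) (G := G) hτ0 hτ1 hχ hψ u))).1
  linarith

-- The extra factor `⟪u, σ⟫` gives the transport term a sign in the imaginary part.
lemma integral_transportDensity_le (hτ0 : 0 ≤ τ) (hτ1 : τ ≤ 1) (hσ : ‖σ‖ = 1)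
    (hχ : IsCutoff χ M) (hH : ContDiff ℝ 2 H) (hG : ∀ u, fpResolvent N τ σ H u = G u)
    (hdata : Integrable (dataDensity p H G)) :
    ∫ u, transportDensity τ σ χ p H u
      ≤ (∫ u, energyDensity τ χ p H u) / 2
        + ((2 * M + |p - 1| + 1 + |2 + N|) ^ 2 + 1) / 2 * ∫ u, dataDensity p H G u := by
  have hζ : IsLocalizedSymbol χ p (2 * M + |p - 1| + 1)
      fun u => ⟪u, σ⟫_ℝ * cutoffWeight χ (p - 1) u := by
    simpa only [sub_add_cancel] using (hχ.isLocalizedSymbol_cutoffWeight (p - 1)).inner_mul hσ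
  have hφ : ContDiff ℝ 1 fun v => (τ + ‖v‖ ^ 2) * (⟪v, σ⟫_ℝ * cutoffWeight χ (p - 1) v) :=
    (contDiff_const.add (contDiff_norm_sq ℝ)).mul hζ.contDiff
  have hφc : HasCompactSupport fun v =>
      (τ + ‖v‖ ^ 2) * (⟪v, σ⟫_ℝ * cutoffWeight χ (p - 1) v) := hζ.hasCompactSupport.mul_left
  have henergy := integrable_energyDensity τ p hχ hH
  rw [← MeasureTheory.integral_div, ← MeasureTheory.integral_const_mul,
    ← integral_add (henergy.div_const _) (hdata.const_mul _)]
  refine integral_le_integral_of_le_add (integrable_transportDensity τ p σ hχ hH)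
    ((henergy.div_const _).add (hdata.const_mul _))
    ((integrable_im_greenDensity hφ hφc hH).const_mul (-1)) ?_ fun u => ?_
  · rw [MeasureTheory.integral_const_mul]
    exact mul_eq_zero_of_right _ (integral_im_greenDensity hφ hφc hH)
  have him := congrArg Complex.im
    (greenDensity_add_norm_sq_mul (hζ.contDiff.differentiable one_ne_zero u) (hG u))
  rw [Complex.sub_im, Complex.add_im, Complex.ofReal_im, Complex.I_mul_im, Complex.ofReal_re,
    zero_add] at him
  have hrem := (abs_le.1 ((Complex.abs_im_le_norm _).trans
    (norm_energyRemainder_le (N := N) (H := H) (G := G) hτ0 hτ1 hχ hζ u))).2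
  rw [transportDensity]
  linarith

lemma inner_sq_mul_jb_le (hτ0 : 0 ≤ τ) (hσ : ‖σ‖ = 1) (u : Vs d) :
    ⟪u, σ⟫_ℝ ^ 2 * jb u ≤ ⟪u, σ⟫_ℝ ^ 2 * (τ + ‖u‖ ^ 2) + jb u := by
  have hs : ⟪u, σ⟫_ℝ ^ 2 ≤ jb u ^ 2 := sq_le_sq' (abs_le.1 (abs_inner_le_jb hσ u)).1
    (abs_le.1 (abs_inner_le_jb hσ u)).2
  have hw : ⟪u, σ⟫_ℝ ^ 2 * (τ + ‖u‖ ^ 2) ≤ ⟪u, σ⟫_ℝ ^ 2 * (τ + ‖u‖ ^ 2) * jb u :=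
    le_mul_of_one_le_right (by positivity) (one_le_jb u)
  have hτ : ⟪u, σ⟫_ℝ ^ 2 * (1 - τ) ≤ ⟪u, σ⟫_ℝ ^ 2 :=
    mul_le_of_le_one_right (sq_nonneg _) (by linarith)
  refine le_of_mul_le_mul_right ?_ (jb_pos u)
  calc ⟪u, σ⟫_ℝ ^ 2 * jb u * jb u
      = ⟪u, σ⟫_ℝ ^ 2 * (τ + ‖u‖ ^ 2) + ⟪u, σ⟫_ℝ ^ 2 * (1 - τ) := by
        rw [mul_assoc, ← sq, sq_jb]
        ring
    _ ≤ (⟪u, σ⟫_ℝ ^ 2 * (τ + ‖u‖ ^ 2) + jb u) * jb u := by linarith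

lemma two_mul_abs_inner_mul_jb_mul_le (hτ0 : 0 ≤ τ) (hσ : ‖σ‖ = 1) (u : Vs d) {a b : ℝ}
    (hab : 0 ≤ a * b) :
    2 * (|⟪u, σ⟫_ℝ| * jb u * (a * b))
      ≤ (τ + ‖u‖ ^ 2) * b ^ 2 + (⟪u, σ⟫_ℝ ^ 2 + 1) * a ^ 2 := by
  set s := ⟪u, σ⟫_ℝ
  set w := τ + ‖u‖ ^ 2
  have hw0 : 0 ≤ w := by positivity
  have hs : s ^ 2 ≤ ‖u‖ ^ 2 := sq_le_sq.2 ((abs_inner_le_norm hσ u).trans (le_abs_self _))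
  have hsj : |s| * jb u ≤ √w * √(s ^ 2 + 1) := by
    rw [← Real.sqrt_mul hw0]
    refine Real.le_sqrt_of_sq_le ?_
    rw [mul_pow, sq_abs, sq_jb]
    linarith [mul_nonneg hτ0 (sq_nonneg s)]
  calc 2 * (|s| * jb u * (a * b)) ≤ 2 * (√w * √(s ^ 2 + 1) * (a * b)) := by gcongr
    _ ≤ (√w * b) ^ 2 + (√(s ^ 2 + 1) * a) ^ 2 := by
        linarith [two_mul_le_add_sq (√w * b) (√(s ^ 2 + 1) * a)]
    _ = w * b ^ 2 + (s ^ 2 + 1) * a ^ 2 := by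
        rw [mul_pow, mul_pow, Real.sq_sqrt hw0, Real.sq_sqrt (by positivity)]

lemma inner_sq_mul_cutoffWeight_le (hτ0 : 0 ≤ τ) (hσ : ‖σ‖ = 1) (hχ : IsCutoff χ M) (p : ℝ)
    (u : Vs d) : ⟪u, σ⟫_ℝ ^ 2 * cutoffWeight χ p u
      ≤ ⟪u, σ⟫_ℝ ^ 2 * (τ + ‖u‖ ^ 2) * cutoffWeight χ (p - 1) u + jb u ^ p := by
  have hψ : cutoffWeight χ p u = cutoffWeight χ (p - 1) u * jb u := by
    rw [← cutoffWeight_add_one, sub_add_cancel]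
  calc ⟪u, σ⟫_ℝ ^ 2 * cutoffWeight χ p u
      = ⟪u, σ⟫_ℝ ^ 2 * jb u * cutoffWeight χ (p - 1) u := by rw [hψ]; ring
    _ ≤ (⟪u, σ⟫_ℝ ^ 2 * (τ + ‖u‖ ^ 2) + jb u) * cutoffWeight χ (p - 1) u :=
        mul_le_mul_of_nonneg_right (inner_sq_mul_jb_le hτ0 hσ u) (cutoffWeight_nonneg _ _ _)
    _ = ⟪u, σ⟫_ℝ ^ 2 * (τ + ‖u‖ ^ 2) * cutoffWeight χ (p - 1) u + cutoffWeight χ p u := by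
        rw [hψ]; ring
    _ ≤ ⟪u, σ⟫_ℝ ^ 2 * (τ + ‖u‖ ^ 2) * cutoffWeight χ (p - 1) u + jb u ^ p := by
        gcongr
        exact hχ.cutoffWeight_le_jb_rpow p u

lemma abs_inner_mul_fderiv_cutoffWeight_le (hτ0 : 0 ≤ τ) (hσ : ‖σ‖ = 1)
    (hχ : IsCutoff χ M) (p : ℝ) (u : Vs d) :
    |⟪u, σ⟫_ℝ * fderiv ℝ (cutoffWeight χ (p + 1)) u σ| ≤ (2 * M + |p + 1|) / 2 *
      (⟪u, σ⟫_ℝ ^ 2 * (τ + ‖u‖ ^ 2) * cutoffWeight χ (p - 1) u + 2 * jb u ^ p) := by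
  set s := ⟪u, σ⟫_ℝ
  have hM := hχ.gradient_bound_nonneg
  set A := 2 * M + |p + 1|
  have hjp := jb_rpow_pos u p
  have hderiv : ‖fderiv ℝ (cutoffWeight χ (p + 1)) u‖ ≤ A * (χ u * jb u ^ p) := by
    refine le_of_mul_le_mul_left ?_ (jb_pos u)
    refine ((hχ.isLocalizedSymbol_cutoffWeight (p + 1)).jb_mul_norm_fderiv_le u).trans_eq ?_
    rw [jb_rpow_add_one]
    ring
  have hσderiv : |fderiv ℝ (cutoffWeight χ (p + 1)) u σ| ≤ A * (χ u * jb u ^ p) := by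
    simpa only [hσ, mul_one, Real.norm_eq_abs] using (ContinuousLinearMap.le_opNorm _ σ).trans
      (mul_le_mul_of_nonneg_right hderiv (norm_nonneg σ))
  have hyoung : 2 * (|s| * χ u) ≤ s ^ 2 * χ u ^ 2 + 1 := by
    have := two_mul_le_add_sq (|s| * χ u) 1
    rw [mul_pow, sq_abs] at this
    linarith
  calc |s * fderiv ℝ (cutoffWeight χ (p + 1)) u σ|
      ≤ |s| * (A * (χ u * jb u ^ p)) := by
        rw [abs_mul]
        gcongr
    _ = A / 2 * (2 * (|s| * χ u) * jb u ^ p) := by ring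
    _ ≤ A / 2 * ((s ^ 2 * χ u ^ 2 + 1) * jb u ^ p) := by gcongr
    _ = A / 2 * (s ^ 2 * cutoffWeight χ p u + jb u ^ p) := by rw [cutoffWeight]; ring
    _ ≤ A / 2 * (s ^ 2 * (τ + ‖u‖ ^ 2) * cutoffWeight χ (p - 1) u + 2 * jb u ^ p) := by
        gcongr ?_ * ?_
        linarith [inner_sq_mul_cutoffWeight_le hτ0 hσ hχ p u]

lemma two_mul_abs_inner_mul_cutoffWeight_mul_le (hτ0 : 0 ≤ τ) (hσ : ‖σ‖ = 1)
    (hχ : IsCutoff χ M) (p : ℝ) (H : Vs d → ℂ) (u : Vs d) :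
    2 * (|⟪u, σ⟫_ℝ| * cutoffWeight χ (p + 1) u * (‖H u‖ * ‖fderiv ℝ H u‖))
      ≤ energyDensity τ χ p H u + transportDensity τ σ χ p H u
        + 2 * (‖H u‖ ^ 2 * jb u ^ p) := by
  have hyoung := two_mul_abs_inner_mul_jb_mul_le (a := ‖H u‖) (b := ‖fderiv ℝ H u‖) hτ0 hσ u
    (by positivity)
  have hcut : ⟪u, σ⟫_ℝ ^ 2 * cutoffWeight χ p u + cutoffWeight χ p u
      ≤ ⟪u, σ⟫_ℝ ^ 2 * (τ + ‖u‖ ^ 2) * cutoffWeight χ (p - 1) u + 2 * jb u ^ p := by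
    linarith [inner_sq_mul_cutoffWeight_le hτ0 hσ hχ p u, hχ.cutoffWeight_le_jb_rpow p u]
  calc 2 * (|⟪u, σ⟫_ℝ| * cutoffWeight χ (p + 1) u * (‖H u‖ * ‖fderiv ℝ H u‖))
      = cutoffWeight χ p u * (2 * (|⟪u, σ⟫_ℝ| * jb u * (‖H u‖ * ‖fderiv ℝ H u‖))) := by
        rw [cutoffWeight_add_one]
        ring
    _ ≤ cutoffWeight χ p u * ((τ + ‖u‖ ^ 2) * ‖fderiv ℝ H u‖ ^ 2
        + (⟪u, σ⟫_ℝ ^ 2 + 1) * ‖H u‖ ^ 2) :=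
        mul_le_mul_of_nonneg_left hyoung (cutoffWeight_nonneg χ p u)
    _ = energyDensity τ χ p H u
        + (⟪u, σ⟫_ℝ ^ 2 * cutoffWeight χ p u + cutoffWeight χ p u) * ‖H u‖ ^ 2 := by
        rw [energyDensity]
        ring
    _ ≤ energyDensity τ χ p H u + transportDensity τ σ χ p H u
        + 2 * (‖H u‖ ^ 2 * jb u ^ p) := by
        rw [transportDensity]
        linarith [mul_le_mul_of_nonneg_right hcut (sq_nonneg ‖H u‖)]

lemma fderiv_inner_mul_mul_norm_sq (hσ : ‖σ‖ = 1) {ψ : Vs d → ℝ} {u : Vs d}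
    (hψ : DifferentiableAt ℝ ψ u) (hH : DifferentiableAt ℝ H u) :
    fderiv ℝ (fun v => ⟪v, σ⟫_ℝ * ψ v * ‖H v‖ ^ 2) u σ
      = (⟪u, σ⟫_ℝ * fderiv ℝ ψ u σ + ψ u) * ‖H u‖ ^ 2
        + 2 * (⟪u, σ⟫_ℝ * ψ u * ⟪H u, fderiv ℝ H u σ⟫_ℝ) := by
  have hsψ : DifferentiableAt ℝ (fun v => ⟪v, σ⟫_ℝ * ψ v) u :=
    (differentiableAt_id.inner ℝ (differentiableAt_const σ)).mul hψ
  have hnormH := hH.hasFDerivAt.norm_sq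
  rw [fderiv_fun_mul hsψ hnormH.differentiableAt, hnormH.fderiv]
  simp only [add_apply, smul_apply, ContinuousLinearMap.comp_apply, innerSL_apply_apply,
    smul_eq_mul, nsmul_eq_mul]
  rw [fderiv_inner_mul hψ, real_inner_self_eq_norm_sq, hσ]
  push_cast
  ring

lemma cutoffWeight_mul_norm_sq_le (hτ0 : 0 ≤ τ) (hσ : ‖σ‖ = 1)
    (hχ : IsCutoff χ M) (p : ℝ) (G : Vs d → ℂ) {u : Vs d} (hH : DifferentiableAt ℝ H u) :
    cutoffWeight χ (p + 1) u * ‖H u‖ ^ 2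
      ≤ energyDensity τ χ p H u + ((2 * M + |p + 1|) / 2 + 1) * transportDensity τ σ χ p H u
        + (2 * M + |p + 1| + 2) * dataDensity p H G u
        + fderiv ℝ (fun v => ⟪v, σ⟫_ℝ * cutoffWeight χ (p + 1) v * ‖H v‖ ^ 2) u σ := by
  have hM := hχ.gradient_bound_nonneg
  set A := 2 * M + |p + 1|
  set s := ⟪u, σ⟫_ℝ
  set ψ := cutoffWeight χ (p + 1)
  have hψ : DifferentiableAt ℝ ψ u :=
    (hχ.isLocalizedSymbol_cutoffWeight (p + 1)).contDiff.differentiable one_ne_zero u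
  have hdrift : -(s * fderiv ℝ ψ u σ) * ‖H u‖ ^ 2
      ≤ A / 2 * (transportDensity τ σ χ p H u + 2 * (‖H u‖ ^ 2 * jb u ^ p)) := by
    have h := mul_le_mul_of_nonneg_right ((neg_le_abs _).trans
      (abs_inner_mul_fderiv_cutoffWeight_le hτ0 hσ hχ p u)) (sq_nonneg ‖H u‖)
    refine h.trans_eq ?_
    rw [transportDensity]
    ring
  have hcross : -(2 * (s * ψ u * ⟪H u, fderiv ℝ H u σ⟫_ℝ))
      ≤ energyDensity τ χ p H u + transportDensity τ σ χ p H u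
        + 2 * (‖H u‖ ^ 2 * jb u ^ p) := by
    have hinner : |⟪H u, fderiv ℝ H u σ⟫_ℝ| ≤ ‖H u‖ * ‖fderiv ℝ H u‖ :=
      (abs_real_inner_le_norm _ _).trans (mul_le_mul_of_nonneg_left
        (ContinuousLinearMap.unit_le_opNorm _ σ hσ.le) (norm_nonneg _))
    calc -(2 * (s * ψ u * ⟪H u, fderiv ℝ H u σ⟫_ℝ))
        ≤ 2 * |s * ψ u * ⟪H u, fderiv ℝ H u σ⟫_ℝ| := by
          linarith [neg_le_abs (s * ψ u * ⟪H u, fderiv ℝ H u σ⟫_ℝ)]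
      _ ≤ 2 * (|s| * ψ u * (‖H u‖ * ‖fderiv ℝ H u‖)) := by
          rw [abs_mul, abs_mul, abs_of_nonneg (cutoffWeight_nonneg χ (p + 1) u)]
          exact mul_le_mul_of_nonneg_left (mul_le_mul_of_nonneg_left hinner
            (mul_nonneg (abs_nonneg s) (cutoffWeight_nonneg χ (p + 1) u))) two_pos.le
      _ ≤ _ := two_mul_abs_inner_mul_cutoffWeight_mul_le hτ0 hσ hχ p H u
  rw [fderiv_inner_mul_mul_norm_sq hσ hψ hH]
  linarith [mul_le_mul_of_nonneg_left (norm_sq_mul_jb_rpow_le_dataDensity p H G u)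
    (by positivity : 0 ≤ A + 2)]

lemma integrable_cutoffWeight_mul_norm_sq (hχ : IsCutoff χ M) (p : ℝ) (hH : Continuous H) :
    Integrable fun u => cutoffWeight χ p u * ‖H u‖ ^ 2 := by
  have hψ := hχ.isLocalizedSymbol_cutoffWeight p
  exact (hψ.contDiff.continuous.mul (hH.norm.pow 2)).integrable_of_hasCompactSupport
    hψ.hasCompactSupport.mul_right

lemma integral_cutoffWeight_mul_norm_sq_le (hτ0 : 0 ≤ τ) (hσ : ‖σ‖ = 1)
    (hχ : IsCutoff χ M) (hH : ContDiff ℝ 2 H) (hdata : Integrable (dataDensity p H G)) :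
    ∫ u, cutoffWeight χ (p + 1) u * ‖H u‖ ^ 2
      ≤ (∫ u, energyDensity τ χ p H u)
        + ((2 * M + |p + 1|) / 2 + 1) * (∫ u, transportDensity τ σ χ p H u)
        + (2 * M + |p + 1| + 2) * ∫ u, dataDensity p H G u := by
  have hψ := hχ.isLocalizedSymbol_cutoffWeight (p + 1)
  have hH1 : ContDiff ℝ 1 H := hH.of_le one_le_two
  have hF : ContDiff ℝ 1 fun v => ⟪v, σ⟫_ℝ * cutoffWeight χ (p + 1) v * ‖H v‖ ^ 2 :=
    ((contDiff_id.inner ℝ contDiff_const).mul hψ.contDiff).mul (hH1.norm_sq ℝ)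
  have hFc : HasCompactSupport fun v => ⟪v, σ⟫_ℝ * cutoffWeight χ (p + 1) v * ‖H v‖ ^ 2 :=
    hψ.hasCompactSupport.mul_left.mul_right
  have henergy := integrable_energyDensity τ p hχ hH
  have htransport := integrable_transportDensity τ p σ hχ hH
  have hsum : Integrable fun u => energyDensity τ χ p H u
      + ((2 * M + |p + 1|) / 2 + 1) * transportDensity τ σ χ p H u :=
    henergy.add (htransport.const_mul _)
  rw [← MeasureTheory.integral_const_mul, ← MeasureTheory.integral_const_mul,
    ← integral_add henergy (htransport.const_mul _),
    ← integral_add hsum (hdata.const_mul _)]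
  exact integral_le_integral_of_le_add
    (integrable_cutoffWeight_mul_norm_sq hχ (p + 1) hH1.continuous)
    (hsum.add (hdata.const_mul _))
    (integrable_fderiv_apply_of_hasCompactSupport _ hF hFc σ)
    (integral_fderiv_apply_eq_zero _ hF hFc σ)
    fun u => cutoffWeight_mul_norm_sq_le hτ0 hσ hχ p G (hH1.differentiable one_ne_zero u)

lemma exists_integral_cutoffWeight_mul_norm_sq_le (d : ℕ) (N p : ℝ) (hM : 0 ≤ M) :
    ∃ C > (0 : ℝ), ∀ τ : ℝ, 0 ≤ τ → τ ≤ 1 → ∀ σ : Vs d, ‖σ‖ = 1 → ∀ χ : Vs d → ℝ, IsCutoff χ M →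
      ∀ H G : Vs d → ℂ, ContDiff ℝ 2 H → (∀ u, fpResolvent N τ σ H u = G u) →
        Integrable (dataDensity p H G) →
          ∫ u, cutoffWeight χ (p + 1) u * ‖H u‖ ^ 2 ≤ C * ∫ u, dataDensity p H G u := by
  set A := (2 * M + |p + 1|) / 2 + 1
  set B := (2 * M + |p| + |2 + N|) ^ 2 + 1
  set B' := (2 * M + |p - 1| + 1 + |2 + N|) ^ 2 + 1
  refine ⟨B + A * (B / 2 + B' / 2) + (2 * M + |p + 1| + 2), by positivity,
    fun τ hτ0 hτ1 σ hσ χ hχ H G hH hG hdata => ?_⟩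
  set D := ∫ u, dataDensity p H G u
  have henergy : ∫ u, energyDensity τ χ p H u ≤ B * D :=
    integral_energyDensity_le hτ0 hτ1 hχ hH hG hdata
  have htransport : ∫ u, transportDensity τ σ χ p H u ≤ (B / 2 + B' / 2) * D := by
    have := integral_transportDensity_le hτ0 hτ1 hσ hχ hH hG hdata
    linarith
  calc ∫ u, cutoffWeight χ (p + 1) u * ‖H u‖ ^ 2
      ≤ (∫ u, energyDensity τ χ p H u) + A * (∫ u, transportDensity τ σ χ p H u)
        + (2 * M + |p + 1| + 2) * D :=
        integral_cutoffWeight_mul_norm_sq_le hτ0 hσ hχ hH hdata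
    _ ≤ B * D + A * ((B / 2 + B' / 2) * D) + (2 * M + |p + 1| + 2) * D := by gcongr
    _ = (B + A * (B / 2 + B' / 2) + (2 * M + |p + 1| + 2)) * D := by ring

end Resolvent

section Decay

variable {d : ℕ} {p : ℝ} {H G : Vs d → ℂ}

lemma dataDensity_nonneg (p : ℝ) (H G : Vs d → ℂ) (u : Vs d) : 0 ≤ dataDensity p H G u :=
  mul_nonneg (by positivity) (jb_rpow_pos u p).le

lemma lintegral_dataDensity (p : ℝ) (hH : Continuous H) (G : Vs d → ℂ) :
    ∫⁻ u, ENNReal.ofReal (dataDensity p H G u)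
      = (∫⁻ u, ENNReal.ofReal (‖G u‖ ^ 2 * jb u ^ p))
        + ∫⁻ u, ENNReal.ofReal (‖H u‖ ^ 2 * jb u ^ p) := by
  have hcont : Continuous fun u => ‖H u‖ ^ 2 * jb u ^ p :=
    (hH.norm.pow 2).mul (continuous_jb_rpow p)
  rw [add_comm, ← lintegral_add_left hcont.measurable.ennreal_ofReal]
  refine lintegral_congr fun u => ?_
  have hjp := jb_rpow_pos u p
  rw [← ENNReal.ofReal_add (by positivity) (by positivity), dataDensity, add_mul]

lemma integrable_dataDensity (hH : Continuous H) (hG : Continuous G)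
    (h : ∫⁻ u, ENNReal.ofReal (dataDensity p H G u) ≠ ⊤) : Integrable (dataDensity p H G) := by
  have hcont : Continuous (dataDensity p H G) :=
    ((hH.norm.pow 2).add (hG.norm.pow 2)).mul (continuous_jb_rpow p)
  refine ⟨hcont.aestronglyMeasurable, ?_⟩
  rw [hasFiniteIntegral_iff_ofReal (Eventually.of_forall (dataDensity_nonneg p H G))]
  exact h.lt_top

lemma setLIntegral_norm_sq_mul_jb_rpow_le {χ : Vs d → ℝ} {M : ℝ} {s : Set (Vs d)}
    (hs : MeasurableSet s) (hχ : IsCutoff χ M) (hχs : ∀ u ∈ s, χ u = 1) (p : ℝ)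
    (hH : Continuous H) :
    ∫⁻ u in s, ENNReal.ofReal (‖H u‖ ^ 2 * jb u ^ p)
      ≤ ENNReal.ofReal (∫ u, cutoffWeight χ p u * ‖H u‖ ^ 2) := by
  rw [ofReal_integral_eq_lintegral_ofReal (integrable_cutoffWeight_mul_norm_sq hχ p hH)
    (Eventually.of_forall fun u => mul_nonneg (cutoffWeight_nonneg χ p u) (sq_nonneg _))]
  refine le_trans (setLIntegral_mono' hs fun u hu => ?_) (setLIntegral_le_lintegral s _)
  rw [cutoffWeight, hχs u hu, one_pow, one_mul, mul_comm]

theorem fp_gain_of_decay_general (d : ℕ) (N p : ℝ) :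
    ∃ C > (0 : ℝ), ∀ τ : ℝ, 0 ≤ τ → τ ≤ 1 → ∀ σ : Vs d, ‖σ‖ = 1 →
      ∀ H G : Vs d → ℂ, ContDiff ℝ 2 H → (∀ u, fpResolvent N τ σ H u = G u) →
        ∫⁻ u, ENNReal.ofReal (‖H u‖ ^ 2 * jb u ^ (p + 1))
          ≤ ENNReal.ofReal C * ((∫⁻ u, ENNReal.ofReal (‖G u‖ ^ 2 * jb u ^ p))
            + ∫⁻ u, ENNReal.ofReal (‖H u‖ ^ 2 * jb u ^ p)) := by
  obtain ⟨M, hM, hcutoff⟩ := exists_isCutoff_eq_one_on_ball d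
  obtain ⟨C, hC, hbound⟩ := exists_integral_cutoffWeight_mul_norm_sq_le d N p hM
  refine ⟨C, hC, fun τ hτ0 hτ1 σ hσ H G hH hG => ?_⟩
  rw [← lintegral_dataDensity p hH.continuous G]
  by_cases htop : ∫⁻ u, ENNReal.ofReal (dataDensity p H G u) = ⊤
  · rw [htop, ENNReal.mul_top (ENNReal.ofReal_pos.2 hC).ne']
    exact le_top
  have hGc : Continuous G := funext hG ▸ continuous_fpResolvent N τ σ hH
  have hdata := integrable_dataDensity hH.continuous hGc htop
  rw [← ofReal_integral_eq_lintegral_ofReal hdata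
    (Eventually.of_forall (dataDensity_nonneg p H G)), ← ENNReal.ofReal_mul hC.le]
  have hmeas : Measurable fun u => ENNReal.ofReal (‖H u‖ ^ 2 * jb u ^ (p + 1)) :=
    ((hH.continuous.norm.pow 2).mul (continuous_jb_rpow _)).measurable.ennreal_ofReal
  refine lintegral_le_of_forall_lintegral_ball_le hmeas.aemeasurable 0 fun n => ?_
  obtain ⟨χ, hχ, hχ1⟩ := hcutoff (n + 1) (le_add_of_nonneg_left n.cast_nonneg)
  exact (setLIntegral_norm_sq_mul_jb_rpow_le measurableSet_ball hχ hχ1 (p + 1)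
    hH.continuous).trans
    (ENNReal.ofReal_le_ofReal (hbound τ hτ0 hτ1 σ hσ χ hχ H G hH hG hdata))

end Decay

/-- **Gain of polynomial decay for the rescaled Fokker–Planck resolvent equation**
(Lemma 6.3 of the paper). -/
theorem fp_gain_of_decay
    (d : ℕ) (hd : 1 ≤ d) (α : ℝ) (hα0 : 0 ≤ α) (hα4 : α ≤ 4) :
    ∃ g : ℝ, 0 < g ∧ ∀ q : ℝ, -2 ≤ q → ∃ C > (0 : ℝ),
      ∀ η : ℝ, 0 < η → η ≤ 1 → ∀ σ : Vs d, ‖σ‖ = 1 →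
        ∀ H G : Vs d → ℂ, ContDiff ℝ 2 H → ContDiff ℝ 2 G →
          (∫⁻ u : Vs d, ENNReal.ofReal (‖H u‖ ^ 2 * jb u ^ (q - (d : ℝ) - α))) < ⊤ →
          (∫⁻ u : Vs d, ENNReal.ofReal (‖G u‖ ^ 2 * jb u ^ (q - (d : ℝ) - α))) < ⊤ →
          (∀ u : Vs d,
            -((η ^ ((2 : ℝ) / 3) + ‖u‖ ^ 2 : ℝ) : ℂ) * laplC H u
                + (((d : ℝ) + α : ℝ) : ℂ) * fderiv ℝ H u u
                - Complex.I * ((⟪u, σ⟫_ℝ : ℝ) : ℂ) *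
                    ((η ^ ((2 : ℝ) / 3) + ‖u‖ ^ 2 : ℝ) : ℂ) * H u
              = G u) →
          (∫⁻ u : Vs d, ENNReal.ofReal (‖H u‖ ^ 2 * jb u ^ (q + g - (d : ℝ) - α)))
            ≤ ENNReal.ofReal C *
                ((∫⁻ u : Vs d, ENNReal.ofReal (‖G u‖ ^ 2 * jb u ^ (q - (d : ℝ) - α)))
                  + ∫⁻ u : Vs d, ENNReal.ofReal (‖H u‖ ^ 2 * jb u ^ (q - (d : ℝ) - α))) := by
  refine ⟨1, one_pos, fun q _ => ?_⟩
  obtain ⟨C, hC, hbound⟩ := fp_gain_of_decay_general d (d + α) (q - d - α)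
  refine ⟨C, hC, fun η hη hη1 σ hσ H G hH _ _ _ heq => ?_⟩
  rw [show q + 1 - d - α = q - d - α + 1 by ring]
  exact hbound _ (rpow_nonneg hη.le _) (rpow_le_one hη.le hη1 (by norm_num)) σ hσ H G hH heq

end
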